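/- Let s > 13 be a square-free integer not divisible by 13 and let K = ℚ(√13, √s). Then the Pythagoras number of O_K is at least 6. In particular, the element α = 12 + 2√13 + w² has length exactly 6 (it is a sum of 6 squares in O_K but not of 5), where w = (1+√s)/2 if s ≡ 1 (mod 4), and w = 1+√s if s ≡ 2 or 3 (mod 4). -/

import Mathlib

/-!
The element `α = 12 + 2√13 + w²` is visibly a sum of six squares, namely of
`1, 1, 1, φ, 1 + φ, w` with `φ = (1 + √13)/2` (`six_squares`). That five squares do not suffice is
reduced to the fact that `12 + 2√13` is not a sum of four squares in `ℤ[φ]` (`not_four_squares`),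
a finite check.

Integers of `K = ℚ(√13, √s)`. The four sign changes of `√13` and `√s` carry algebraic integers
of `K` to algebraic integers; they are realised as evaluations of a formal copy of `K`, the
identity embedding being injective by linear independence of `1, √13, √s, √13√s` (`biq_lin`).
Traces to the three quadratic subfields and the norm to `ℚ(√13)` then show
(`integer_coords`, `parity_one`, `parity_two_three`) that an integer `x` has the form `γ + β√s`
with `γ, β ∈ ℤ[φ]` if `s ≡ 2, 3 (mod 4)`, and `(γ + β√s)/2` with `γ ≡ β (mod 2)` in `ℤ[φ]` if
`s ≡ 1 (mod 4)`.

Reduction. Let `α` be a sum of five squares of such elements. The `√s`-part gives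
`∑ γᵢβᵢ = 1`, so some `βᵢ` is nonzero. If `∑ βᵢ²` has trace less than `4`, then exactly one `βᵢ`
is nonzero, it equals `±1`, so does its `γᵢ`, and deleting this index leaves `12 + 2√13` as a sum
of four squares in `ℤ[φ]`. For `s ≡ 2, 3 (mod 4)` the trace of the equation and `s > 13` force
this bound. For `s ≡ 1 (mod 4)` one has `s ≥ 17` and `∑ βᵢ² ≡ 1 (mod 2)`, which leaves the
alternatives `∑ βᵢ² = 2`, contradicting the congruence, and `∑ βᵢ² = 3`, where
`∑ γᵢ² = 49 - 2s + 8√13` would have a negative conjugate.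
-/

/-- The totally real biquadratic field `ℚ(√p, √q)` as a subfield of `ℝ`. -/
noncomputable def biqField (p q : ℕ) : IntermediateField ℚ ℝ :=
  IntermediateField.adjoin ℚ {Real.sqrt p, Real.sqrt q}

/-- The ring of integers of a subfield `K` of `ℝ`, viewed as the set of elements
of `K` that are integral over `ℤ`. -/
def ringOfInt (K : IntermediateField ℚ ℝ) : Set ℝ :=
  {x : ℝ | x ∈ K ∧ IsIntegral ℤ x}

/-- `α` is a sum of `n` squares of elements of `S`. -/
def SumOfNSquaresIn (S : Set ℝ) (n : ℕ) (α : ℝ) : Prop :=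
  ∃ x : Fin n → ℝ, (∀ i, x i ∈ S) ∧ α = ∑ i, x i ^ 2

/-- `α` is a sum of squares of elements of `S`. -/
def IsSumOfSquaresIn (S : Set ℝ) (α : ℝ) : Prop := ∃ n, SumOfNSquaresIn S n α

/-- `K` is a totally real biquadratic field. -/
def IsBiquadratic (K : IntermediateField ℚ ℝ) : Prop :=
  ∃ p q : ℕ, Squarefree p ∧ Squarefree q ∧ 1 < p ∧ 1 < q ∧ p ≠ q ∧ K = biqField p q

/-! ### Rational arithmetic -/

lemma squarefree_not_isSquare {n : ℕ} (hn : Squarefree n) (h1 : 1 < n) : ¬ IsSquare n := by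
  rintro ⟨m, rfl⟩
  have := hn m dvd_rfl
  rw [Nat.isUnit_iff] at this
  subst this
  omega

lemma rat_sq_eq_zero {n : ℕ} (hn : ¬ IsSquare n) {a b : ℚ} (h : a ^ 2 = n * b ^ 2) :
    a = 0 ∧ b = 0 := by
  have hb : b = 0 := by
    by_contra hb
    apply hn
    rw [← Rat.isSquare_natCast_iff]
    refine ⟨a / b, ?_⟩
    field_simp
    linarith
  subst hb
  simpa using h

/-- A rational number whose square becomes an integer after multiplication by a squarefree
integer is itself an integer. -/
lemma rat_int_of_squarefree_mul_sq {d : ℕ} (hd : Squarefree d) {q : ℚ} {k : ℤ}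
    (h : (d : ℚ) * q ^ 2 = k) : ∃ m : ℤ, q = m := by
  have hden : (q.den : ℚ) ≠ 0 := by exact_mod_cast q.den_nz
  have h1 : (d : ℤ) * q.num ^ 2 = k * (q.den : ℤ) ^ 2 := by
    have h2 : q * q.den = q.num := Rat.mul_den_eq_num q
    have h3 : (d : ℚ) * (q.num : ℚ) ^ 2 = k * (q.den : ℚ) ^ 2 := by
      rw [← h2, ← h]; ring
    exact_mod_cast h3
  have hcop : IsCoprime ((q.den : ℤ) ^ 2) (q.num ^ 2) := by
    apply IsCoprime.pow
    rw [Int.isCoprime_iff_gcd_eq_one, Int.gcd_comm]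
    simpa [Int.gcd] using q.reduced
  have hdvd : ((q.den : ℤ) ^ 2) ∣ d := hcop.dvd_of_dvd_mul_right ⟨k, by rw [h1]; ring⟩
  have hdvd' : q.den * q.den ∣ d := by
    rw [← pow_two]; exact_mod_cast hdvd
  have hone : q.den = 1 := Nat.isUnit_iff.mp (hd _ hdvd')
  exact ⟨q.num, by rw [← Rat.mul_den_eq_num q, hone]; simp⟩

/-- An algebraic integer which is rational is an integer. -/
lemma int_of_isIntegral {q : ℚ} (h : IsIntegral ℤ (q : ℝ)) : ∃ m : ℤ, q = m := by
  have h' : IsIntegral ℤ q := by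
    have := (isIntegral_algHom_iff (algebraMap ℚ ℝ).toIntAlgHom
      (algebraMap ℚ ℝ).injective (x := q)).mp (by simpa using h)
    exact this
  obtain ⟨m, hm⟩ := IsIntegrallyClosed.isIntegral_iff.mp h'
  exact ⟨m, by simpa using hm.symm⟩

/-- If both conjugates `p ± q√d` are algebraic integers, with `d` squarefree, then
`2p` and `2q` are integers `U`, `V` with `U² ≡ dV² (mod 4)`. -/
lemma quad_integral {d : ℕ} (hd : Squarefree d) {g : ℝ} (hg : g ^ 2 = d) {p q : ℚ}
    (h1 : IsIntegral ℤ (p + q * g : ℝ)) (h2 : IsIntegral ℤ (p - q * g : ℝ)) :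
    ∃ U V : ℤ, 2 * p = U ∧ 2 * q = V ∧ ∃ N : ℤ, U ^ 2 - d * V ^ 2 = 4 * N := by
  obtain ⟨U, hU⟩ := int_of_isIntegral (q := 2 * p) (by
    have := h1.add h2
    convert! this using 1
    push_cast; ring)
  obtain ⟨N, hN⟩ := int_of_isIntegral (q := p ^ 2 - d * q ^ 2) (by
    have := h1.mul h2
    convert! this using 1
    push_cast; rw [← hg]; ring)
  obtain ⟨V, hV⟩ := rat_int_of_squarefree_mul_sq hd (q := 2 * q) (k := U ^ 2 - 4 * N) (by
    push_cast; rw [← hU, ← hN]; ring)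
  refine ⟨U, V, hU, hV, N, ?_⟩
  have : (U : ℚ) ^ 2 - d * (V : ℚ) ^ 2 = 4 * N := by
    rw [← hU, ← hV, ← hN]; ring
  exact_mod_cast this

/-! ### The biquadratic field and its conjugations -/

/-- The ring `ℚ[X, Y] / (X² - 13, Y² - s)`, as a tower of two quadratic algebras. -/
abbrev FormalBiq (s : ℕ) : Type :=
  QuadraticAlgebra (QuadraticAlgebra ℚ 13 0) (s : QuadraticAlgebra ℚ 13 0) 0

/-- Evaluation of the formal ring at real square roots `e` of `13` and `f` of `s`; changing the
signs of `e` and `f` produces the conjugations. -/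
noncomputable def evalBiq {s : ℕ} {e f : ℝ} (he : e ^ 2 = 13) (hf : f ^ 2 = s) :
    FormalBiq s →+* ℝ where
  toFun y := (y.re.re + y.re.im * e) + (y.im.re + y.im.im * e) * f
  map_one' := by simp [QuadraticAlgebra.re_one, QuadraticAlgebra.im_one]
  map_zero' := by simp
  map_add' x y := by simp; ring
  map_mul' x y := by
    simp
    linear_combination (-(x.re.im * y.re.im : ℝ) - x.re.im * y.im.im * f
      - x.im.im * y.re.im * f - x.im.im * y.im.im * s) * he -
      ((x.im.re + x.im.im * e : ℝ) * (y.im.re + y.im.im * e)) * hf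

lemma evalBiq_apply {s : ℕ} {e f : ℝ} (he : e ^ 2 = 13) (hf : f ^ 2 = s) (y : FormalBiq s) :
    evalBiq he hf y = (y.re.re + y.re.im * e) + (y.im.re + y.im.im * e) * f := rfl

lemma sqrt13_lin {a b : ℚ} {e : ℝ} (he : e ^ 2 = 13) (h : (a + b * e : ℝ) = 0) :
    a = 0 ∧ b = 0 := by
  have h13 : ¬ IsSquare 13 := by
    apply squarefree_not_isSquare _ (by norm_num)
    exact (by norm_num : Nat.Prime 13).prime.squarefree
  apply rat_sq_eq_zero h13
  have : (a : ℝ) ^ 2 = 13 * b ^ 2 := by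
    rw [← he]; linear_combination (a - b * e) * h
  exact_mod_cast this

/-- Linear independence of `1, √13, √s, √13√s` over `ℚ`. -/
lemma biq_lin {s : ℕ} (hs : Squarefree s) (hs13 : 13 < s) (hnd : ¬ (13 ∣ s)) {e f : ℝ}
    (he : e ^ 2 = 13) (hf : f ^ 2 = s) {a b c d : ℚ}
    (h : ((a + b * e) + (c + d * e) * f : ℝ) = 0) : a = 0 ∧ b = 0 ∧ c = 0 ∧ d = 0 := by
  have hp : Nat.Prime 13 := by norm_num
  have hsq : ¬ IsSquare s := squarefree_not_isSquare hs (by omega)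
  have hsq' : ¬ IsSquare (13 * s) := by
    apply squarefree_not_isSquare _ (by omega)
    rw [Nat.squarefree_mul ((Nat.Prime.coprime_iff_not_dvd hp).mpr hnd)]
    exact ⟨hp.prime.squarefree, hs⟩
  -- Comparing `(a + b√13)² = s (c + d√13)²` coefficientwise.
  obtain ⟨h1, h2⟩ := sqrt13_lin (a := a ^ 2 + 13 * b ^ 2 - s * (c ^ 2 + 13 * d ^ 2))
    (b := 2 * a * b - 2 * s * c * d) he (by
      push_cast
      linear_combination ((a + b * e) - (c + d * e) * f : ℝ) * h +
        (c + d * e : ℝ) ^ 2 * hf + (s * d ^ 2 - b ^ 2 : ℝ) * he)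
  -- Taking norms to `ℚ` leaves two cases, `N(a + b√13) = ± s N(c + d√13)`.
  have h3 : ((a ^ 2 - 13 * b ^ 2) - s * (c ^ 2 - 13 * d ^ 2)) *
      ((a ^ 2 - 13 * b ^ 2) + s * (c ^ 2 - 13 * d ^ 2)) = 0 := by
    linear_combination (a ^ 2 + 13 * b ^ 2 + s * (c ^ 2 + 13 * d ^ 2)) * h1 -
      13 * (2 * a * b + 2 * s * c * d) * h2
  rcases mul_eq_zero.mp h3 with h4 | h4
  · obtain ⟨ha, hc⟩ := rat_sq_eq_zero hsq (a := a) (b := c) (by linear_combination (h1 + h4) / 2)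
    obtain ⟨hb, hd⟩ := rat_sq_eq_zero hsq (a := b) (b := d)
      (by linear_combination (h1 - h4) / 26)
    exact ⟨ha, hb, hc, hd⟩
  · obtain ⟨ha, hd⟩ := rat_sq_eq_zero hsq' (a := a) (b := d)
      (by push_cast; linear_combination (h1 + h4) / 2)
    obtain ⟨hb, hc⟩ := rat_sq_eq_zero hsq' (a := 13 * b) (b := c)
      (by push_cast; linear_combination 13 * (h1 - h4) / 2)
    exact ⟨ha, by linarith, hc, hd⟩

lemma evalBiq_injective {s : ℕ} (hs : Squarefree s) (hs13 : 13 < s) (hnd : ¬ (13 ∣ s))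
    {e f : ℝ} (he : e ^ 2 = 13) (hf : f ^ 2 = s) : Function.Injective (evalBiq he hf) := by
  rw [injective_iff_map_eq_zero]
  intro y hy
  rw [evalBiq_apply] at hy
  obtain ⟨h1, h2, h3, h4⟩ := biq_lin hs hs13 hnd he hf hy
  ext <;> assumption

lemma isIntegral_sqrt (n : ℕ) : IsIntegral ℤ (Real.sqrt n) := by
  apply IsIntegral.of_pow (n := 2) (by norm_num)
  rw [Real.sq_sqrt (by positivity)]
  exact isIntegral_algebraMap (R := ℤ) (x := (n : ℤ))

lemma mem_biqField_range {s : ℕ} (he : Real.sqrt 13 ^ 2 = 13) (hf : Real.sqrt s ^ 2 = s)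
    {x : ℝ} (hx : x ∈ biqField 13 s) : ∃ y : FormalBiq s, evalBiq he hf y = x := by
  have halg : ∀ z ∈ ({Real.sqrt (13 : ℕ), Real.sqrt s} : Set ℝ), IsAlgebraic ℚ z := by
    rintro z (rfl | rfl)
    · exact ((isIntegral_sqrt 13).tower_top (A := ℚ)).isAlgebraic
    · exact ((isIntegral_sqrt s).tower_top (A := ℚ)).isAlgebraic
  have hx' : x ∈ Algebra.adjoin ℚ ({Real.sqrt (13 : ℕ), Real.sqrt s} : Set ℝ) := by
    rw [← IntermediateField.adjoin_toSubalgebra_of_isAlgebraic halg]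
    exact hx
  clear hx
  induction hx' using Algebra.adjoin_induction with
  | mem z hz =>
    rcases hz with rfl | rfl
    · exact ⟨⟨⟨0, 1⟩, 0⟩, by simp [evalBiq_apply]⟩
    · exact ⟨⟨0, ⟨1, 0⟩⟩, by simp [evalBiq_apply]⟩
  | algebraMap r => exact ⟨⟨⟨r, 0⟩, 0⟩, by simp [evalBiq_apply]⟩
  | add a b _ _ ha hb =>
    obtain ⟨y, rfl⟩ := ha
    obtain ⟨z, rfl⟩ := hb
    exact ⟨y + z, map_add _ _ _⟩
  | mul a b _ _ ha hb =>
    obtain ⟨y, rfl⟩ := ha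
    obtain ⟨z, rfl⟩ := hb
    exact ⟨y * z, map_mul _ _ _⟩

/-- Integer coordinates of an algebraic integer of `ℚ(√13, √s)`. The congruences modulo `4` come
from the traces to the three quadratic subfields, and `M`, `N` encode the relative norm
`(M + N√13)/2` to `ℚ(√13)`. -/
lemma integer_coords {s : ℕ} (hs : Squarefree s) (hs13 : 13 < s) (hnd : ¬ (13 ∣ s))
    {x : ℝ} (hx : x ∈ ringOfInt (biqField 13 s)) :
    ∃ u v w t M N : ℤ,
      4 * x = (u + v * Real.sqrt 13) + (w + t * Real.sqrt 13) * Real.sqrt s ∧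
      (4 ∣ u ^ 2 - 13 * v ^ 2) ∧ (4 ∣ u ^ 2 - s * w ^ 2) ∧ (4 ∣ u ^ 2 - 13 * s * t ^ 2) ∧
      u ^ 2 + 13 * v ^ 2 - s * (w ^ 2 + 13 * t ^ 2) = 8 * M ∧
      u * v - s * w * t = 4 * N ∧ (4 ∣ M ^ 2 - 13 * N ^ 2) := by
  have he : Real.sqrt 13 ^ 2 = 13 := Real.sq_sqrt (by norm_num)
  have hf : Real.sqrt s ^ 2 = s := Real.sq_sqrt (by positivity)
  have he' : (-Real.sqrt 13) ^ 2 = 13 := by rw [neg_sq, he]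
  have hf' : (-Real.sqrt s) ^ 2 = s := by rw [neg_sq, hf]
  obtain ⟨hxK, hxI⟩ := hx
  obtain ⟨y, rfl⟩ := mem_biqField_range he hf hxK
  have hy : IsIntegral ℤ y :=
    (isIntegral_algHom_iff (evalBiq he hf).toIntAlgHom
      (evalBiq_injective hs hs13 hnd he hf)).mp hxI
  have hc : ∀ {e f : ℝ} (he : e ^ 2 = 13) (hf : f ^ 2 = s), IsIntegral ℤ (evalBiq he hf y) :=
    fun he hf => hy.map (evalBiq he hf).toIntAlgHom
  have i1 := hc he hf
  have i2 := hc he hf'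
  have i3 := hc he' hf
  have i4 := hc he' hf'
  simp only [evalBiq_apply] at i1 i2 i3 i4 ⊢
  generalize Real.sqrt 13 = e at *
  generalize Real.sqrt s = f at *
  generalize y.re.re = a at *
  generalize y.re.im = b at *
  generalize y.im.re = c at *
  generalize y.im.im = d at *
  have hp : Nat.Prime 13 := by norm_num
  have hsq13 : Squarefree 13 := hp.prime.squarefree
  have hsq13s : Squarefree (13 * s) := by
    rw [Nat.squarefree_mul ((Nat.Prime.coprime_iff_not_dvd hp).mpr hnd)]
    exact ⟨hsq13, hs⟩
  obtain ⟨u, v, hu, hv, k1, hk1⟩ := quad_integral hsq13 (g := e) (by simpa using he)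
    (p := 2 * a) (q := 2 * b)
    (by convert! i1.add i2 using 1; push_cast; ring)
    (by convert! i3.add i4 using 1; push_cast; ring)
  obtain ⟨u2, w, hu2, hw, k2, hk2⟩ := quad_integral hs (g := f) hf
    (p := 2 * a) (q := 2 * c)
    (by convert! i1.add i3 using 1; push_cast; ring)
    (by convert! i2.add i4 using 1; push_cast; ring)
  obtain ⟨u3, t, hu3, ht, k3, hk3⟩ := quad_integral hsq13s (g := e * f)
    (by rw [mul_pow, he, hf]; push_cast; ring) (p := 2 * a) (q := 2 * d)
    (by convert! i1.add i4 using 1; push_cast; ring)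
    (by convert! i2.add i3 using 1; push_cast; ring)
  obtain ⟨M, N, hM, hN, k4, hk4⟩ := quad_integral hsq13 (g := e) (by simpa using he)
    (p := a ^ 2 + 13 * b ^ 2 - s * (c ^ 2 + 13 * d ^ 2)) (q := 2 * a * b - 2 * s * c * d)
    (by
      convert! i1.mul i2 using 1; push_cast
      linear_combination (c + d * e : ℝ) ^ 2 * hf + (s * d ^ 2 - b ^ 2 : ℝ) * he)
    (by
      convert! i3.mul i4 using 1; push_cast
      linear_combination (c - d * e : ℝ) ^ 2 * hf + (s * d ^ 2 - b ^ 2 : ℝ) * he)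
  obtain rfl : u2 = u := by exact_mod_cast hu2.symm.trans hu
  obtain rfl : u3 = u2 := by exact_mod_cast hu3.symm.trans hu
  push_cast at hk1 hk2 hk3 hk4
  refine ⟨u3, v, w, t, M, N, ?_, ⟨k1, hk1⟩, ⟨k2, hk2⟩, ⟨k3, hk3⟩, ?_, ?_, ⟨k4, hk4⟩⟩
  · have e1 : (u3 : ℝ) = 2 * (2 * a) := by exact_mod_cast hu.symm
    have e2 : (v : ℝ) = 2 * (2 * b) := by exact_mod_cast hv.symm
    have e3 : (w : ℝ) = 2 * (2 * c) := by exact_mod_cast hw.symm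
    have e4 : (t : ℝ) = 2 * (2 * d) := by exact_mod_cast ht.symm
    rw [e1, e2, e3, e4]; ring
  · have : (u3 : ℚ) ^ 2 + 13 * v ^ 2 - s * (w ^ 2 + 13 * t ^ 2) = 8 * M := by
      rw [← hM, ← hu, ← hv, ← hw, ← ht]; ring
    exact_mod_cast this
  · have : (u3 : ℚ) * v - s * w * t = 4 * N := by
      rw [← hN, ← hu, ← hv, ← hw, ← ht]; ring
    exact_mod_cast this

/-! ### Parity conditions on the coordinates -/

lemma sq_mod_four (z : ℤ) : z ^ 2 % 4 = z % 2 := by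
  rcases Int.even_or_odd' z with ⟨k, rfl | rfl⟩
  · have : (2 * k) ^ 2 = 4 * k ^ 2 := by ring
    omega
  · have : (2 * k + 1) ^ 2 = 4 * (k ^ 2 + k) + 1 := by ring
    omega

lemma mul_mod_two (a b : ℤ) : a * b % 2 = (a % 2) * (b % 2) % 2 := Int.mul_emod a b 2

/-- For `s ≡ 1 (mod 4)`, the relative trace `(u + v√13)/2` and the element `(w + t√13)/2` lie in
`ℤ[(1 + √13)/2]` and are congruent modulo `2`. -/
lemma parity_one {s u v w t M N : ℤ} (hs : s % 4 = 1) (h1 : 4 ∣ u ^ 2 - 13 * v ^ 2)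
    (h2 : 4 ∣ u ^ 2 - s * w ^ 2) (h3 : 4 ∣ u ^ 2 - 13 * s * t ^ 2)
    (hM : u ^ 2 + 13 * v ^ 2 - s * (w ^ 2 + 13 * t ^ 2) = 8 * M)
    (hN : u * v - s * w * t = 4 * N) :
    w % 2 = t % 2 ∧ ∃ m n : ℤ, u = w + 2 * m ∧ v = t + 2 * n ∧ m % 2 = n % 2 := by
  have hu := sq_mod_four u
  have hv := sq_mod_four v
  have hw := sq_mod_four w
  have ht := sq_mod_four t
  obtain ⟨k, rfl⟩ : ∃ k, s = 1 + 4 * k := ⟨s / 4, by omega⟩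
  have e1 : (1 + 4 * k) * w ^ 2 = w ^ 2 + 4 * (k * w ^ 2) := by ring
  have e2 : 13 * (1 + 4 * k) * t ^ 2 = 13 * t ^ 2 + 4 * (13 * k * t ^ 2) := by ring
  rw [e1] at h2
  rw [e2] at h3
  have hwt : w % 2 = t % 2 := by omega
  obtain ⟨m, rfl⟩ : ∃ m, u = w + 2 * m := ⟨(u - w) / 2, by omega⟩
  obtain ⟨n, rfl⟩ : ∃ n, v = t + 2 * n := ⟨(v - t) / 2, by omega⟩
  refine ⟨hwt, m, n, rfl, rfl, ?_⟩
  have f1 : m ^ 2 + m * w + 13 * n ^ 2 + 13 * (n * t) - k * (w ^ 2 + 13 * t ^ 2) = 2 * M := by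
    linarith
  have f2 : w * n + m * t + 2 * (m * n) - 2 * (k * w * t) = 2 * N := by linarith
  have hm := sq_mod_four m
  have hn := sq_mod_four n
  rcases Int.emod_two_eq_zero_or_one w with h | h
  · have g1 := mul_mod_two m w
    have g2 := mul_mod_two n t
    have g3 := mul_mod_two k (w ^ 2 + 13 * t ^ 2)
    have g4 : (w ^ 2 + 13 * t ^ 2) % 2 = 0 := by omega
    rw [h, mul_zero] at g1
    rw [← hwt, h, mul_zero] at g2
    rw [g4, mul_zero] at g3
    omega
  · have g1 := mul_mod_two w n
    have g2 := mul_mod_two m t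
    rw [h, one_mul] at g1
    rw [← hwt, h, mul_one] at g2
    omega

set_option maxHeartbeats 1000000 in
/-- For `s ≡ 2, 3 (mod 4)`, both components of the element over `ℤ[(1 + √13)/2]` lie in that
ring. -/
lemma parity_two_three {s u v w t M N : ℤ} (hs : s % 4 = 2 ∨ s % 4 = 3)
    (h1 : 4 ∣ u ^ 2 - 13 * v ^ 2)
    (h2 : 4 ∣ u ^ 2 - s * w ^ 2) (h3 : 4 ∣ u ^ 2 - 13 * s * t ^ 2)
    (hM : u ^ 2 + 13 * v ^ 2 - s * (w ^ 2 + 13 * t ^ 2) = 8 * M)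
    (hN : u * v - s * w * t = 4 * N) (hMN : 4 ∣ M ^ 2 - 13 * N ^ 2) :
    ∃ a b c d : ℤ, u = 2 * a ∧ v = 2 * b ∧ w = 2 * c ∧ t = 2 * d ∧ a % 2 = b % 2 ∧
      c % 2 = d % 2 := by
  have hu := sq_mod_four u
  have hv := sq_mod_four v
  have hw := sq_mod_four w
  have ht := sq_mod_four t
  have hMs := sq_mod_four M
  have hNs := sq_mod_four N
  obtain ⟨k, r, rfl, hr⟩ : ∃ k r, s = r + 4 * k ∧ (r = 2 ∨ r = 3) :=
    ⟨s / 4, s % 4, by omega, hs⟩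
  have e1 : (r + 4 * k) * w ^ 2 = r * w ^ 2 + 4 * (k * w ^ 2) := by ring
  have e2 : 13 * (r + 4 * k) * t ^ 2 = 13 * (r * t ^ 2) + 4 * (13 * k * t ^ 2) := by ring
  rw [e1] at h2
  rw [e2] at h3
  have hev : u % 2 = 0 ∧ v % 2 = 0 ∧ w % 2 = 0 ∧ t % 2 = 0 := by
    clear hM hN hMN hMs hNs e1 e2
    generalize k * w ^ 2 = p at *
    generalize 13 * k * t ^ 2 = q at *
    have huw : u % 2 = 0 ∧ w % 2 = 0 := by
      clear h1 h3
      rcases hr with rfl | rfl <;> omega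
    have hv0 : v % 2 = 0 := by
      clear h2 h3
      omega
    have ht0 : t % 2 = 0 := by
      clear h1 h2
      rcases hr with rfl | rfl <;> omega
    exact ⟨huw.1, hv0, huw.2, ht0⟩
  obtain ⟨a, rfl⟩ : ∃ m, u = 2 * m := ⟨u / 2, by omega⟩
  obtain ⟨b, rfl⟩ : ∃ m, v = 2 * m := ⟨v / 2, by omega⟩
  obtain ⟨c, rfl⟩ : ∃ m, w = 2 * m := ⟨w / 2, by omega⟩
  obtain ⟨d, rfl⟩ : ∃ m, t = 2 * m := ⟨t / 2, by omega⟩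
  refine ⟨a, b, c, d, rfl, rfl, rfl, rfl, ?_⟩
  have f1 : a ^ 2 + 13 * b ^ 2 - r * (c ^ 2 + 13 * d ^ 2) - 4 * (k * (c ^ 2 + 13 * d ^ 2))
      = 2 * M := mul_left_cancel₀ four_ne_zero (by linear_combination hM)
  have f2 : a * b - r * (c * d) - 4 * (k * c * d) = N :=
    mul_left_cancel₀ four_ne_zero (by linear_combination hN)
  have ha := sq_mod_four a
  have hb := sq_mod_four b
  have hc := sq_mod_four c
  have hd := sq_mod_four d
  have g1 := mul_mod_two a b
  have g2 := mul_mod_two c d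
  clear hs hu hv hw ht h1 h2 h3 e1 e2 hev hM hN
  rcases hr with rfl | rfl <;> rcases Int.emod_two_eq_zero_or_one a with h | h <;>
    rcases Int.emod_two_eq_zero_or_one b with hh2 | hh2 <;>
    rcases Int.emod_two_eq_zero_or_one c with hh3 | hh3 <;>
    rcases Int.emod_two_eq_zero_or_one d with hh4 | hh4 <;>
    rw [h, hh2] at g1 <;> rw [hh3, hh4] at g2 <;> norm_num at g1 g2 <;> omega

/-! ### Sums of squares in `ℤ[(1 + √13)/2]` -/

/-- The possible values of `(u² + 13v², uv)` for `u ≡ v (mod 2)` and `u² + 13v² ≤ 48`. -/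
lemma term_values {u v : ℤ} (h : u % 2 = v % 2) (hb : u ^ 2 + 13 * v ^ 2 ≤ 48) :
    (u * v = 0 ∧ (u ^ 2 + 13 * v ^ 2 = 0 ∨ u ^ 2 + 13 * v ^ 2 = 4 ∨ u ^ 2 + 13 * v ^ 2 = 16 ∨
      u ^ 2 + 13 * v ^ 2 = 36)) ∨
    ((u * v = 1 ∨ u * v = -1) ∧ u ^ 2 + 13 * v ^ 2 = 14) ∨
    ((u * v = 3 ∨ u * v = -3) ∧ u ^ 2 + 13 * v ^ 2 = 22) ∨
    ((u * v = 5 ∨ u * v = -5) ∧ u ^ 2 + 13 * v ^ 2 = 38) := by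
  have hv1 : v ≤ 1 := by nlinarith [sq_nonneg u]
  have hv2 : -1 ≤ v := by nlinarith [sq_nonneg u]
  have hu1 : u ≤ 6 := by nlinarith [sq_nonneg v]
  have hu2 : -6 ≤ u := by nlinarith [sq_nonneg v]
  interval_cases v <;> interval_cases u <;> revert h hb <;> decide

/-- `12 + 2√13` is not a sum of four squares in `ℤ[(1 + √13)/2]`: in terms of
`xᵢ = (uᵢ + vᵢ√13)/2`, the equation `∑ xᵢ² = 12 + 2√13` reads as the two hypotheses. -/
lemma not_four_squares (u v : Fin 4 → ℤ) (hp : ∀ i, u i % 2 = v i % 2)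
    (h1 : ∑ i, (u i ^ 2 + 13 * v i ^ 2) = 48) (h2 : ∑ i, u i * v i = 4) : False := by
  have hnn : ∀ i, 0 ≤ u i ^ 2 + 13 * v i ^ 2 := fun i => by positivity
  have hle : ∀ i, u i ^ 2 + 13 * v i ^ 2 ≤ 48 := fun i => by
    rw [← h1]
    exact Finset.single_le_sum (f := fun i => u i ^ 2 + 13 * v i ^ 2)
      (fun j _ => hnn j) (Finset.mem_univ i)
  have k0 := term_values (hp 0) (hle 0)
  have k1 := term_values (hp 1) (hle 1)
  have k2 := term_values (hp 2) (hle 2)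
  have k3 := term_values (hp 3) (hle 3)
  simp only [Fin.sum_univ_four] at h1 h2
  generalize u 0 ^ 2 + 13 * v 0 ^ 2 = n0 at *
  generalize u 1 ^ 2 + 13 * v 1 ^ 2 = n1 at *
  generalize u 2 ^ 2 + 13 * v 2 ^ 2 = n2 at *
  generalize u 3 ^ 2 + 13 * v 3 ^ 2 = n3 at *
  generalize u 0 * v 0 = p0 at *
  generalize u 1 * v 1 = p1 at *
  generalize u 2 * v 2 = p2 at *
  generalize u 3 * v 3 = p3 at *
  clear hp hnn hle
  omega

/-- An element `(w + t√13)/2` of `ℤ[(1 + √13)/2]` whose square has trace less than `7` is `0`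
or `±1`. -/
lemma form_small {w t : ℤ} (h : w % 2 = t % 2) (hb : w ^ 2 + 13 * t ^ 2 < 14) :
    t = 0 ∧ (w = 0 ∨ w = 2 ∨ w = -2) := by
  have hv1 : t ≤ 1 := by nlinarith [sq_nonneg w]
  have hv2 : -1 ≤ t := by nlinarith [sq_nonneg w]
  have hu1 : w < 4 := by nlinarith [sq_nonneg t]
  have hu2 : -4 < w := by nlinarith [sq_nonneg t]
  interval_cases t <;> interval_cases w <;> revert h hb <;> decide

/-! ### Descent to `ℚ(√13)` -/

/-- If `∑ βᵢ²` has half-trace less than `2`, where `βᵢ = (wᵢ + tᵢ√13)/2`, and `∑ αᵢβᵢ = 1`, where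
`αᵢ = (uᵢ + vᵢ√13)/2`, then exactly one `βᵢ` is nonzero, and `αᵢ` and `βᵢ` are
`±1` for this index. -/
lemma unique_index (u v w t : Fin 5 → ℤ) (hp : ∀ i, w i % 2 = t i % 2)
    (hW : ∑ i, (w i ^ 2 + 13 * t i ^ 2) < 8)
    (h3 : ∑ i, (u i * w i + 13 * (v i * t i)) = 4)
    (h4 : ∑ i, (u i * t i + v i * w i) = 0) :
    ∃ i : Fin 5, u i ^ 2 = 4 ∧ v i = 0 ∧ w i ^ 2 = 4 ∧ t i = 0 ∧
      ∀ j, w (i.succAbove j) = 0 ∧ t (i.succAbove j) = 0 := by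
  have hsmall : ∀ i, t i = 0 ∧ (w i = 0 ∨ w i = 2 ∨ w i = -2) := fun i => by
    apply form_small (hp i)
    have := Finset.single_le_sum (f := fun i => w i ^ 2 + 13 * t i ^ 2)
      (fun j _ => by positivity) (Finset.mem_univ i)
    linarith
  have ht : ∀ i, t i = 0 := fun i => (hsmall i).1
  simp only [ht, mul_zero, add_zero, zero_add] at hW h3 h4
  obtain ⟨i, hi⟩ : ∃ i, w i ≠ 0 := by
    by_contra! hcon
    simp [hcon] at h3
  rw [Fin.sum_univ_succAbove _ i] at hW h3 h4
  have hi4 : w i ^ 2 = 4 := by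
    rcases (hsmall i).2 with h | h | h
    · exact absurd h hi
    · rw [h]; norm_num
    · rw [h]; norm_num
  have hj : ∀ j, w (i.succAbove j) = 0 := fun j => by
    have := Finset.single_le_sum (f := fun j => w (i.succAbove j) ^ 2)
      (fun j _ => by positivity) (Finset.mem_univ j)
    have hlt : w (i.succAbove j) ^ 2 < 4 := by
      norm_num at hW
      linarith
    rcases (hsmall (i.succAbove j)).2 with h | h | h
    · exact h
    · rw [h] at hlt; norm_num at hlt
    · rw [h] at hlt; norm_num at hlt
  simp only [hj, mul_zero, Finset.sum_const_zero, add_zero] at h3 h4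
  refine ⟨i, ?_, ?_, hi4, ht i, fun j => ⟨hj j, ht _⟩⟩
  · have : u i ^ 2 * w i ^ 2 = 16 := by rw [← mul_pow, h3]; norm_num
    rw [hi4] at this
    linarith
  · exact (mul_eq_zero.mp h4).resolve_right hi

/-- The integer system for `s ≡ 2, 3 (mod 4)`: writing `xᵢ = αᵢ + βᵢ√s` with
`αᵢ = (uᵢ + vᵢ√13)/2` and `βᵢ = (wᵢ + tᵢ√13)/2`, it says `∑ αᵢ² + s ∑ βᵢ² = 13 + s + 2√13` and
`∑ αᵢβᵢ = 1`. The trace of the first equation and `s > 13` bound the trace of `∑ βᵢ²`. -/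
lemma no_solution_two_three {s : ℤ} (hs : 13 < s) (u v w t : Fin 5 → ℤ)
    (huv : ∀ i, u i % 2 = v i % 2) (hwt : ∀ i, w i % 2 = t i % 2)
    (h1 : ∑ i, (u i ^ 2 + 13 * v i ^ 2) + s * ∑ i, (w i ^ 2 + 13 * t i ^ 2) = 52 + 4 * s)
    (h2 : ∑ i, u i * v i + s * ∑ i, w i * t i = 4)
    (h3 : ∑ i, (u i * w i + 13 * (v i * t i)) = 4)
    (h4 : ∑ i, (u i * t i + v i * w i) = 0) : False := by
  have hA : 0 ≤ ∑ i, (u i ^ 2 + 13 * v i ^ 2) := by positivity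
  obtain ⟨i, hu, hv, hw, ht, hj⟩ := unique_index u v w t hwt (by nlinarith) h3 h4
  simp only [Fin.sum_univ_succAbove _ i, hu, hv, hw, ht, hj] at h1 h2
  norm_num at h1 h2
  exact not_four_squares _ _ (fun j => huv (i.succAbove j)) (by linarith) h2

/-- The integer system for `s ≡ 1 (mod 4)`: writing `2xᵢ = αᵢ + βᵢ√s` with
`βᵢ = (wᵢ + tᵢ√13)/2` and `αᵢ = βᵢ + (mᵢ + nᵢ√13)`, it says
`∑ αᵢ² + s ∑ βᵢ² = 49 + s + 8√13` and `∑ αᵢβᵢ = 1`. -/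
lemma no_solution_one {s : ℤ} (hs : 17 ≤ s) (w t m n : Fin 5 → ℤ)
    (hwt : ∀ i, w i % 2 = t i % 2) (hmn : ∀ i, m i % 2 = n i % 2)
    (h1 : ∑ i, ((w i + 2 * m i) ^ 2 + 13 * (t i + 2 * n i) ^ 2) +
      s * ∑ i, (w i ^ 2 + 13 * t i ^ 2) = 196 + 4 * s)
    (h2 : ∑ i, (w i + 2 * m i) * (t i + 2 * n i) + s * ∑ i, w i * t i = 16)
    (h3 : ∑ i, ((w i + 2 * m i) * w i + 13 * ((t i + 2 * n i) * t i)) = 4)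
    (h4 : ∑ i, ((w i + 2 * m i) * t i + (t i + 2 * n i) * w i) = 0) : False := by
  have hA : 0 ≤ ∑ i, ((w i + 2 * m i) ^ 2 + 13 * (t i + 2 * n i) ^ 2) := by positivity
  rcases lt_or_ge (∑ i, (w i ^ 2 + 13 * t i ^ 2)) 8 with hW | hW
  · obtain ⟨i, hu, hv, hw, ht, hj⟩ :=
      unique_index (fun i => w i + 2 * m i) (fun i => t i + 2 * n i) w t hwt hW h3 h4
    have hn : n i = 0 := by omega
    simp only [Fin.sum_univ_succAbove _ i, hu, hw, ht, hn, hj] at h1 h2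
    refine not_four_squares (fun j => m (i.succAbove j)) (fun j => n (i.succAbove j))
      (fun j => hmn (i.succAbove j)) ?_ ?_
    · have : ∑ j, ((0 + 2 * m (i.succAbove j)) ^ 2 + 13 * (0 + 2 * n (i.succAbove j)) ^ 2) =
          4 * ∑ j, (m (i.succAbove j) ^ 2 + 13 * n (i.succAbove j) ^ 2) := by
        rw [Finset.mul_sum]
        exact Finset.sum_congr rfl fun j _ => by ring
      rw [this] at h1
      norm_num at h1
      linarith
    · have : ∑ j, (0 + 2 * m (i.succAbove j)) * (0 + 2 * n (i.succAbove j)) =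
          4 * ∑ j, m (i.succAbove j) * n (i.succAbove j) := by
        rw [Finset.mul_sum]
        exact Finset.sum_congr rfl fun j _ => by ring
      rw [this] at h2
      norm_num at h2
      linarith
  · -- The half-trace of `∑ βᵢ²` is an integer, because `∑ βᵢ² ≡ ∑ αᵢβᵢ = 1 (mod 2)`.
    have hmod : (4 : ℤ) ∣ ∑ i, (w i ^ 2 + 13 * t i ^ 2) := by
      have hsplit : ∑ i, (w i ^ 2 + 13 * t i ^ 2) =
          4 - 2 * ∑ i, (m i * w i + 13 * (n i * t i)) := by
        rw [← h3, Finset.mul_sum, ← Finset.sum_sub_distrib]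
        exact Finset.sum_congr rfl fun j _ => by ring
      have heven : (2 : ℤ) ∣ ∑ i, (m i * w i + 13 * (n i * t i)) := by
        refine Finset.dvd_sum fun i _ => ?_
        have g1 := mul_mod_two (m i) (w i)
        have g2 := mul_mod_two (n i) (t i)
        rw [hmn i, hwt i, ← g2] at g1
        omega
      omega
    have hW16 : ∑ i, (w i ^ 2 + 13 * t i ^ 2) < 16 := by nlinarith
    have ht : ∀ i, t i = 0 := fun i => by
      refine (form_small (hwt i) ?_).1
      have := Finset.single_le_sum (f := fun i => w i ^ 2 + 13 * t i ^ 2)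
        (fun j _ => by positivity) (Finset.mem_univ i)
      omega
    have hweven : ∀ i, ∃ c, w i = 2 * c := fun i => by
      have := hwt i
      rw [ht i] at this
      exact ⟨w i / 2, by omega⟩
    choose c hc using hweven
    have hcases : ∑ i, (w i ^ 2 + 13 * t i ^ 2) = 8 ∨ ∑ i, (w i ^ 2 + 13 * t i ^ 2) = 12 := by
      omega
    rcases hcases with h8 | h12
    · -- Here `∑ mᵢcᵢ = -1` and `∑ nᵢcᵢ = 0`, which have the same parity.
      have k1 : ∑ i, m i * c i = -1 := by
        have : ∑ i, ((w i + 2 * m i) * w i + 13 * ((t i + 2 * n i) * t i)) =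
            ∑ i, (w i ^ 2 + 13 * t i ^ 2) + 4 * ∑ i, m i * c i := by
          rw [Finset.mul_sum, ← Finset.sum_add_distrib]
          exact Finset.sum_congr rfl fun j _ => by rw [ht j, hc j]; ring
        linarith
      have k2 : ∑ i, n i * c i = 0 := by
        have : ∑ i, ((w i + 2 * m i) * t i + (t i + 2 * n i) * w i) =
            4 * ∑ i, n i * c i := by
          rw [Finset.mul_sum]
          exact Finset.sum_congr rfl fun j _ => by rw [ht j, hc j]; ring
        linarith
      have k3 : (2 : ℤ) ∣ ∑ i, (m i * c i - n i * c i) := by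
        refine Finset.dvd_sum fun i _ => ?_
        rw [← sub_mul]
        exact Dvd.dvd.mul_right (by have := hmn i; omega) _
      rw [Finset.sum_sub_distrib, k1, k2] at k3
      norm_num at k3
    · -- Positivity of the conjugate fails: `x² + 13y² ≥ 7xy`, since `7 < 2√13`.
      have k1 : ∑ i, w i * t i = 0 := by simp [ht]
      rw [k1] at h2
      have k2 : 7 * ∑ i, (w i + 2 * m i) * (t i + 2 * n i) ≤
          ∑ i, ((w i + 2 * m i) ^ 2 + 13 * (t i + 2 * n i) ^ 2) := by
        rw [Finset.mul_sum]
        refine Finset.sum_le_sum fun i _ => ?_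
        nlinarith [sq_nonneg (2 * (w i + 2 * m i) - 7 * (t i + 2 * n i)),
          sq_nonneg (t i + 2 * n i)]
      rw [h12] at h1
      linarith

/-! ### Conclusion -/

/-- Comparison of the coordinates of `16 ∑ xᵢ² = P + Q√13 + R√s` in the basis
`1, √13, √s, √13√s`. -/
lemma compare_coords {s : ℕ} (hs : Squarefree s) (hs13 : 13 < s) (hnd : ¬ (13 ∣ s))
    {x : Fin 5 → ℝ} {u v w t : Fin 5 → ℤ}
    (hx : ∀ i, 4 * x i = (u i + v i * Real.sqrt 13) + (w i + t i * Real.sqrt 13) * Real.sqrt s)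
    {P Q R : ℤ}
    (h : 16 * ∑ i, x i ^ 2 = (P + Q * Real.sqrt 13) + R * Real.sqrt s) :
    ∑ i, (u i ^ 2 + 13 * v i ^ 2) + s * ∑ i, (w i ^ 2 + 13 * t i ^ 2) = P ∧
    2 * (∑ i, u i * v i + s * ∑ i, w i * t i) = Q ∧
    2 * ∑ i, (u i * w i + 13 * (v i * t i)) = R ∧
    2 * ∑ i, (u i * t i + v i * w i) = 0 := by
  have he : Real.sqrt 13 ^ 2 = 13 := Real.sq_sqrt (by norm_num)
  have hf : Real.sqrt s ^ 2 = s := Real.sq_sqrt (by positivity)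
  have hsum : 16 * ∑ i, x i ^ 2 = ∑ i, (4 * x i) ^ 2 := by
    rw [Finset.mul_sum]
    exact Finset.sum_congr rfl fun i _ => by ring
  have hexp : ∑ i, (4 * x i) ^ 2 =
      (∑ i, ((u i : ℝ) ^ 2 + 13 * v i ^ 2) + s * ∑ i, ((w i : ℝ) ^ 2 + 13 * t i ^ 2)) +
      (2 * (∑ i, (u i : ℝ) * v i + s * ∑ i, (w i : ℝ) * t i)) * Real.sqrt 13 +
      (2 * ∑ i, ((u i : ℝ) * w i + 13 * (v i * t i)) +
        2 * (∑ i, ((u i : ℝ) * t i + v i * w i)) * Real.sqrt 13) * Real.sqrt s := by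
    simp only [Finset.mul_sum, Finset.sum_mul, ← Finset.sum_add_distrib]
    refine Finset.sum_congr rfl fun i _ => ?_
    rw [hx i]
    linear_combination ((v i : ℝ) ^ 2 + 2 * v i * t i * Real.sqrt s + s * t i ^ 2) * he +
      ((w i : ℝ) + t i * Real.sqrt 13) ^ 2 * hf
  rw [hsum, hexp] at h
  obtain ⟨a1, a2, a3, a4⟩ := biq_lin hs hs13 hnd he hf
    (a := ∑ i, ((u i : ℚ) ^ 2 + 13 * v i ^ 2) + s * ∑ i, ((w i : ℚ) ^ 2 + 13 * t i ^ 2) - P)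
    (b := 2 * (∑ i, (u i : ℚ) * v i + s * ∑ i, (w i : ℚ) * t i) - Q)
    (c := 2 * ∑ i, ((u i : ℚ) * w i + 13 * (v i * t i)) - R)
    (d := 2 * ∑ i, ((u i : ℚ) * t i + v i * w i))
    (by push_cast; linear_combination h)
  rw [sub_eq_zero] at a1 a2 a3
  exact ⟨by exact_mod_cast a1, by exact_mod_cast a2, by exact_mod_cast a3, by exact_mod_cast a4⟩

lemma not_five_squares
    (s : ℕ) (hs : Squarefree s) (hs13 : 13 < s) (hnd : ¬ (13 ∣ s)) :
    ¬ SumOfNSquaresIn (ringOfInt (biqField 13 s)) 5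
      (12 + 2 * Real.sqrt 13 +
        (if s % 4 = 1 then (1 + Real.sqrt s) / 2 else 1 + Real.sqrt s) ^ 2) := by
  rintro ⟨x, hx, hα⟩
  have hf : Real.sqrt s ^ 2 = s := Real.sq_sqrt (by positivity)
  choose u v w t M N hx4 h1 h2 h3 hM hN hMN using fun i => integer_coords hs hs13 hnd (hx i)
  split_ifs at hα with h4
  · have hpar := fun i => parity_one (s := s) (by omega) (h1 i) (h2 i) (h3 i) (hM i) (hN i)
    choose hwt m n hu hv hmn using hpar
    obtain ⟨c1, c2, c3, c4⟩ := compare_coords hs hs13 hnd hx4 (P := 196 + 4 * s) (Q := 32)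
      (R := 8) (by rw [← hα]; push_cast; linear_combination 4 * hf)
    simp only [hu, hv] at c1 c2 c3 c4
    exact no_solution_one (s := s) (by omega) w t m n hwt hmn c1 (by linarith) (by linarith)
      (by linarith)
  · have h0 : s % 4 ≠ 0 := fun h0 => by
      have := hs 2 (Nat.dvd_of_mod_eq_zero h0)
      norm_num at this
    have hpar := fun i => parity_two_three (s := s) (by omega) (h1 i) (h2 i) (h3 i) (hM i) (hN i)
      (hMN i)
    choose a b c d hu hv hw ht hab hcd using hpar
    obtain ⟨c1, c2, c3, c4⟩ := compare_coords hs hs13 hnd (x := fun i => x i / 2)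
      (u := a) (v := b) (w := c) (t := d)
      (fun i => by
        have := hx4 i
        rw [hu i, hv i, hw i, ht i] at this
        push_cast at this
        linear_combination this / 2)
      (P := 52 + 4 * s) (Q := 8) (R := 8) (by
        simp only [div_pow, ← Finset.sum_div]
        rw [← hα]; push_cast; linear_combination 4 * hf)
    exact no_solution_two_three (s := s) (by omega) a b c d hab hcd c1 (by linarith) (by linarith)
      (by linarith)

/-- The six squares are those of `1, 1, 1, φ, 1 + φ, w` with `φ = (1 + √13)/2`. -/
lemma six_squares (s : ℕ) :
    SumOfNSquaresIn (ringOfInt (biqField 13 s)) 6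
      (12 + 2 * Real.sqrt 13 +
        (if s % 4 = 1 then (1 + Real.sqrt s) / 2 else 1 + Real.sqrt s) ^ 2) := by
  have he : Real.sqrt 13 ^ 2 = 13 := Real.sq_sqrt (by norm_num)
  have hf : Real.sqrt s ^ 2 = s := Real.sq_sqrt (by positivity)
  -- Half of `1 + g` is integral when `g² = 4k + 1`, as a root of `X² - X - k`.
  have hhalf : ∀ (g : ℝ) (k : ℤ), g ^ 2 = 4 * k + 1 → IsIntegral ℤ ((1 + g) / 2) := by
    intro g k hg
    refine ⟨Polynomial.X ^ 2 - Polynomial.X - Polynomial.C k, by monicity!, ?_⟩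
    simp only [Polynomial.eval₂_sub, Polynomial.eval₂_X_pow, Polynomial.eval₂_X,
      Polynomial.eval₂_C, algebraMap_int_eq, Int.coe_castRingHom]
    linear_combination hg / 4
  have hmem13 : Real.sqrt 13 ∈ biqField 13 s :=
    IntermediateField.subset_adjoin _ _ (by simp)
  have hmems : Real.sqrt s ∈ biqField 13 s :=
    IntermediateField.subset_adjoin _ _ (by simp)
  have htwo : (2 : ℝ) ∈ biqField 13 s := ofNat_mem _ 2
  have hone : (1 : ℝ) ∈ ringOfInt (biqField 13 s) := ⟨one_mem _, isIntegral_one⟩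
  have hφ : (1 + Real.sqrt 13) / 2 ∈ ringOfInt (biqField 13 s) :=
    ⟨div_mem (add_mem (one_mem _) hmem13) htwo, hhalf _ 3 (by rw [he]; norm_num)⟩
  have hφ' : 1 + (1 + Real.sqrt 13) / 2 ∈ ringOfInt (biqField 13 s) :=
    ⟨add_mem hone.1 hφ.1, hone.2.add hφ.2⟩
  have hw : (if s % 4 = 1 then (1 + Real.sqrt s) / 2 else 1 + Real.sqrt s) ∈
      ringOfInt (biqField 13 s) := by
    split_ifs with h
    · refine ⟨div_mem (add_mem (one_mem _) hmems) htwo, hhalf _ (s / 4 : ℕ) ?_⟩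
      rw [hf]
      have : s = 4 * (s / 4) + 1 := by omega
      exact_mod_cast this
    · exact ⟨add_mem (one_mem _) hmems, isIntegral_one.add (isIntegral_sqrt s)⟩
  generalize (if s % 4 = 1 then (1 + Real.sqrt s) / 2 else 1 + Real.sqrt s) = w at *
  refine ⟨![1, 1, 1, (1 + Real.sqrt 13) / 2, 1 + (1 + Real.sqrt 13) / 2, w], ?_, ?_⟩
  · intro i
    fin_cases i
    exacts [hone, hone, hone, hφ, hφ', hw]
  · simp [Fin.sum_univ_succ]
    linear_combination - he / 2

/-- Let `s > 13` be squarefree with `13 ∤ s` and `K = ℚ(√13, √s)`.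
Then `P(O_K) ≥ 6`; indeed the element `12 + 2√13 + w²` is a sum of `6` squares in `O_K`
but not of `5`, where `w = (1+√s)/2` if `s ≡ 1 (mod 4)` and `w = 1+√s` otherwise. -/
theorem pythagoras_sqrt13_ge_six
    (s : ℕ) (hs : Squarefree s) (hs13 : 13 < s) (hnd : ¬ (13 ∣ s)) :
    (∃ α ∈ ringOfInt (biqField 13 s), IsSumOfSquaresIn (ringOfInt (biqField 13 s)) α ∧
      ¬ SumOfNSquaresIn (ringOfInt (biqField 13 s)) 5 α) ∧
    SumOfNSquaresIn (ringOfInt (biqField 13 s)) 6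
      (12 + 2 * Real.sqrt 13 +
        (if s % 4 = 1 then (1 + Real.sqrt s) / 2 else 1 + Real.sqrt s) ^ 2) ∧
    ¬ SumOfNSquaresIn (ringOfInt (biqField 13 s)) 5
      (12 + 2 * Real.sqrt 13 +
        (if s % 4 = 1 then (1 + Real.sqrt s) / 2 else 1 + Real.sqrt s) ^ 2) := by
  have h6 := six_squares s
  have h5 := not_five_squares s hs hs13 hnd
  refine ⟨⟨_, ?_, ⟨6, h6⟩, h5⟩, h6, h5⟩
  -- A sum of squares of elements of the ring of integers lies in it.
  obtain ⟨x, hx, hα⟩ := h6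
  rw [hα]
  exact ⟨sum_mem fun i _ => pow_mem (hx i).1 2, IsIntegral.sum _ fun i _ => (hx i).2.pow 2⟩
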